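/- arXiv:1810.04495 — 8 statements merged into one kernel-verified Lean document; each statement's English description precedes it below -/
import Mathlib

section
/- Let T ⊆ (𝔽₂)⁴ be the set of the following 14 vectors: (1,0,0,0), (0,0,0,1), (0,1,1,1), (1,1,1,0), (1,1,0,1), (0,0,1,1), (1,0,1,0), (0,1,1,0), (1,1,1,1), (1,1,0,0), (0,0,1,0), (1,0,1,1), (0,1,0,1), (1,0,0,1) (i.e., all 15 nonzero vectors of (𝔽₂)⁴ except (0,1,0,0)). Then T is non-cubic: every homogeneous polynomial of degree 3 in 4 variables over 𝔽₂ which vanishes at every element of T vanishes at every element of (𝔽₂)⁴. -/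
/-- The set `T` of 14 vectors of `(𝔽₂)⁴` (all 15 nonzero vectors except
`(0,1,0,0)`) is non-cubic: every homogeneous polynomial of degree 3 in 4
variables over `𝔽₂` vanishing at every element of `T` vanishes at every
vector of `(𝔽₂)⁴`. -/
theorem fourteen_vectors_nonCubic
    (P : MvPolynomial (Fin 4) (ZMod 2)) (hP : P.IsHomogeneous 3)
    (hvanish : ∀ w ∈ ([![1,0,0,0], ![0,0,0,1], ![0,1,1,1], ![1,1,1,0],
        ![1,1,0,1], ![0,0,1,1], ![1,0,1,0], ![0,1,1,0], ![1,1,1,1],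
        ![1,1,0,0], ![0,0,1,0], ![1,0,1,1], ![0,1,0,1], ![1,0,0,1]] :
        List (Fin 4 → ZMod 2)), MvPolynomial.eval w P = 0) :
    ∀ w : Fin 4 → ZMod 2, MvPolynomial.eval w P = 0 := by
  have h0 : MvPolynomial.eval (0 : Fin 4 → ZMod 2) P = 0 := by
    rw [MvPolynomial.eval_zero, MvPolynomial.constantCoeff_eq]
    exact hP.coeff_eq_zero (by simp)
  have hsum : ∑ x : Fin 4 → ZMod 2, MvPolynomial.eval x P = 0 := by
    apply MvPolynomial.sum_eval_eq_zero
    have h3 := hP.totalDegree_le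
    simp only [ZMod.card, Fintype.card_fin]
    omega
  have hcases : ∀ w : Fin 4 → ZMod 2, w = ![0,1,0,0] ∨ w = 0 ∨
      w ∈ ([![1,0,0,0], ![0,0,0,1], ![0,1,1,1], ![1,1,1,0],
        ![1,1,0,1], ![0,0,1,1], ![1,0,1,0], ![0,1,1,0], ![1,1,1,1],
        ![1,1,0,0], ![0,0,1,0], ![1,0,1,1], ![0,1,0,1], ![1,0,0,1]] :
        List (Fin 4 → ZMod 2)) := by
    decide
  have hother : ∀ w : Fin 4 → ZMod 2, w ≠ ![0,1,0,0] → MvPolynomial.eval w P = 0 := by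
    intro w hw
    rcases hcases w with h | h | h
    · exact absurd h hw
    · rw [h]; exact h0
    · exact hvanish w h
  intro w
  by_cases hw : w = ![0,1,0,0]
  · rw [Finset.sum_eq_single (![0,1,0,0] : Fin 4 → ZMod 2)
      (fun b _ hb => hother b hb) (fun h => absurd (Finset.mem_univ _) h)] at hsum
    rw [hw]; exact hsum
  · exact hother w hw
end

section
/- Let R = ℤ[√2] and for each element π of the list L = [5, 11, √2+3, √2−3, 3√2−1, √2+5, √2−5, 4√2−1, 4√2+1, 5√2−3, √2−7, √2+7, 4√2−11, 1−7√2] define the vector v(π) ∈ (𝔽₂)⁴ whose four coordinates are 0 or 1 according as the residue class of √2, of 3, of −1, and of √2−1, respectively, is or is not a square in the quotient ring R/(π). Then the 14 vectors v(π), π ∈ L, are pairwise distinct, each is nonzero, and none of them equals (0,1,0,0); equivalently, {v(π) : π ∈ L} is exactly the set of all nonzero vectors of (𝔽₂)⁴ different from (0,1,0,0). -/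
open Zsqrtd in
/-- `a` is a square modulo `π` in `ℤ[√2]`: the residue class of `a` is a
square in the quotient ring `ℤ[√2]/(π)`. -/
def IsSquareModSqrt2 (a π : ℤ√2) : Prop :=
  IsSquare (Ideal.Quotient.mk (Ideal.span {π}) a)

open Zsqrtd in
open scoped Classical in
/-- The vector of quadratic characters of `√2`, `3`, `-1`, `√2 - 1`
modulo `π`. -/
noncomputable def quadCharVecSqrt2 (π : ℤ√2) : Fin 4 → ZMod 2 :=
  ![if IsSquareModSqrt2 sqrtd π then 0 else 1,
    if IsSquareModSqrt2 3 π then 0 else 1,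
    if IsSquareModSqrt2 (-1) π then 0 else 1,
    if IsSquareModSqrt2 (sqrtd - 1) π then 0 else 1]

section
open Zsqrtd
set_option maxRecDepth 100000

lemma sq_of (a π r q : ℤ√2) (h : r * r - a = π * q) : IsSquareModSqrt2 a π := by
  refine ⟨Ideal.Quotient.mk _ r, ?_⟩
  rw [← map_mul, eq_comm, Ideal.Quotient.eq, Ideal.mem_span_singleton]
  exact ⟨q, h⟩

lemma exists_of_sq {a π : ℤ√2} (h : IsSquareModSqrt2 a π) : ∃ r q : ℤ√2, r * r - a = π * q := by
  obtain ⟨r, hr⟩ := h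
  obtain ⟨r, rfl⟩ := Ideal.Quotient.mk_surjective r
  rw [← map_mul, eq_comm, Ideal.Quotient.eq, Ideal.mem_span_singleton] at hr
  exact ⟨r, hr⟩

/-- Non-squares at a split prime: reduce to `ZMod p` through `√2 ↦ s`. -/
lemma not_sq_split (p : ℕ) (s : ZMod p) (hs : s * s = 2) (a π : ℤ√2)
    (hπ : (π.re : ZMod p) + π.im * s = 0)
    (ha : ∀ x : ZMod p, x * x ≠ (a.re : ZMod p) + a.im * s) : ¬ IsSquareModSqrt2 a π := by
  intro h
  obtain ⟨r, q, h⟩ := exists_of_sq h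
  have h1 := congrArg (fun z : ℤ√2 => (z.re : ZMod p)) h
  have h2 := congrArg (fun z : ℤ√2 => (z.im : ZMod p)) h
  simp only [Zsqrtd.re_sub, Zsqrtd.im_sub, Zsqrtd.re_mul, Zsqrtd.im_mul] at h1 h2
  push_cast at h1 h2
  apply ha ((r.re : ZMod p) + r.im * s)
  linear_combination h1 + s * h2 + (q.re + q.im * s) * hπ
    + ((r.im : ZMod p) * r.im - π.im * q.im) * hs

/-- Non-squares at an inert rational prime. -/
lemma not_sq_inert (p : ℕ) (a : ℤ√2)
    (ha : ∀ x y : ZMod p, x * x + 2 * y * y = (a.re : ZMod p) → x * y + y * x ≠ (a.im : ZMod p)) :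
    ¬ IsSquareModSqrt2 a (p : ℤ√2) := by
  intro h
  obtain ⟨r, q, h⟩ := exists_of_sq h
  have h1 := congrArg (fun z : ℤ√2 => (z.re : ZMod p)) h
  have h2 := congrArg (fun z : ℤ√2 => (z.im : ZMod p)) h
  simp only [Zsqrtd.re_sub, Zsqrtd.im_sub, Zsqrtd.re_mul, Zsqrtd.im_mul, Zsqrtd.re_natCast,
    Zsqrtd.im_natCast] at h1 h2
  push_cast at h1 h2
  simp only [CharP.cast_eq_zero] at h1 h2
  exact ha r.re r.im (by linear_combination h1) (by linear_combination h2)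

lemma vec_0 : quadCharVecSqrt2 (5) = ![1, 0, 0, 0] := by
  have h0 := (Nat.cast_ofNat (R := ℤ√2) (n := 5) ▸ not_sq_inert 5 sqrtd (by decide) : ¬ IsSquareModSqrt2 sqrtd 5)
  have h1 := (sq_of 3 (5) ⟨0, 2⟩ ⟨1, 0⟩ (by decide))
  have h2 := (sq_of (-1) (5) ⟨2, 0⟩ ⟨1, 0⟩ (by decide))
  have h3 := (sq_of (sqrtd - 1) (5) ⟨1, 3⟩ ⟨4, 1⟩ (by decide))
  simp only [quadCharVecSqrt2, h0, h1, h2, h3, if_true, if_false]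

lemma vec_1 : quadCharVecSqrt2 (11) = ![0, 0, 0, 1] := by
  have h0 := (sq_of sqrtd (11) ⟨2, 3⟩ ⟨2, 1⟩ (by decide))
  have h1 := (sq_of 3 (11) ⟨5, 0⟩ ⟨2, 0⟩ (by decide))
  have h2 := (sq_of (-1) (11) ⟨0, 4⟩ ⟨3, 0⟩ (by decide))
  have h3 := (Nat.cast_ofNat (R := ℤ√2) (n := 11) ▸ not_sq_inert 11 (sqrtd - 1) (by decide) : ¬ IsSquareModSqrt2 (sqrtd - 1) 11)
  simp only [quadCharVecSqrt2, h0, h1, h2, h3, if_true, if_false]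

lemma vec_2 : quadCharVecSqrt2 (sqrtd + 3) = ![0, 1, 1, 1] := by
  have h0 := (sq_of sqrtd (sqrtd + 3) ⟨2, 0⟩ ⟨2, -1⟩ (by decide))
  have h1 := (not_sq_split 7 4 (by decide) 3 (sqrtd + 3) (by decide) (by decide))
  have h2 := (not_sq_split 7 4 (by decide) (-1) (sqrtd + 3) (by decide) (by decide))
  have h3 := (not_sq_split 7 4 (by decide) (sqrtd - 1) (sqrtd + 3) (by decide) (by decide))
  simp only [quadCharVecSqrt2, h0, h1, h2, h3, if_true, if_false]

lemma vec_3 : quadCharVecSqrt2 (sqrtd - 3) = ![1, 1, 1, 0] := by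
  have h0 := (not_sq_split 7 3 (by decide) sqrtd (sqrtd - 3) (by decide) (by decide))
  have h1 := (not_sq_split 7 3 (by decide) 3 (sqrtd - 3) (by decide) (by decide))
  have h2 := (not_sq_split 7 3 (by decide) (-1) (sqrtd - 3) (by decide) (by decide))
  have h3 := (sq_of (sqrtd - 1) (sqrtd - 3) ⟨3, 0⟩ ⟨-4, -1⟩ (by decide))
  simp only [quadCharVecSqrt2, h0, h1, h2, h3, if_true, if_false]

lemma vec_4 : quadCharVecSqrt2 (3*sqrtd - 1) = ![1, 1, 0, 1] := by
  have h0 := (not_sq_split 17 6 (by decide) sqrtd (3*sqrtd - 1) (by decide) (by decide))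
  have h1 := (not_sq_split 17 6 (by decide) 3 (3*sqrtd - 1) (by decide) (by decide))
  have h2 := (sq_of (-1) (3*sqrtd - 1) ⟨4, 0⟩ ⟨1, 3⟩ (by decide))
  have h3 := (not_sq_split 17 6 (by decide) (sqrtd - 1) (3*sqrtd - 1) (by decide) (by decide))
  simp only [quadCharVecSqrt2, h0, h1, h2, h3, if_true, if_false]

lemma vec_5 : quadCharVecSqrt2 (sqrtd + 5) = ![0, 0, 1, 1] := by
  have h0 := (sq_of sqrtd (sqrtd + 5) ⟨8, 0⟩ ⟨14, -3⟩ (by decide))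
  have h1 := (sq_of 3 (sqrtd + 5) ⟨7, 0⟩ ⟨10, -2⟩ (by decide))
  have h2 := (not_sq_split 23 18 (by decide) (-1) (sqrtd + 5) (by decide) (by decide))
  have h3 := (not_sq_split 23 18 (by decide) (sqrtd - 1) (sqrtd + 5) (by decide) (by decide))
  simp only [quadCharVecSqrt2, h0, h1, h2, h3, if_true, if_false]

lemma vec_6 : quadCharVecSqrt2 (sqrtd - 5) = ![1, 0, 1, 0] := by
  have h0 := (not_sq_split 23 5 (by decide) sqrtd (sqrtd - 5) (by decide) (by decide))
  have h1 := (sq_of 3 (sqrtd - 5) ⟨7, 0⟩ ⟨-10, -2⟩ (by decide))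
  have h2 := (not_sq_split 23 5 (by decide) (-1) (sqrtd - 5) (by decide) (by decide))
  have h3 := (sq_of (sqrtd - 1) (sqrtd - 5) ⟨2, 0⟩ ⟨-1, 0⟩ (by decide))
  simp only [quadCharVecSqrt2, h0, h1, h2, h3, if_true, if_false]

lemma vec_7 : quadCharVecSqrt2 (4*sqrtd - 1) = ![0, 1, 1, 0] := by
  have h0 := (sq_of sqrtd (4*sqrtd - 1) ⟨15, 0⟩ ⟨7, 29⟩ (by decide))
  have h1 := (not_sq_split 31 8 (by decide) 3 (4*sqrtd - 1) (by decide) (by decide))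
  have h2 := (not_sq_split 31 8 (by decide) (-1) (4*sqrtd - 1) (by decide) (by decide))
  have h3 := (sq_of (sqrtd - 1) (4*sqrtd - 1) ⟨10, 0⟩ ⟨3, 13⟩ (by decide))
  simp only [quadCharVecSqrt2, h0, h1, h2, h3, if_true, if_false]

lemma vec_8 : quadCharVecSqrt2 (4*sqrtd + 1) = ![1, 1, 1, 1] := by
  have h0 := (not_sq_split 31 23 (by decide) sqrtd (4*sqrtd + 1) (by decide) (by decide))
  have h1 := (not_sq_split 31 23 (by decide) 3 (4*sqrtd + 1) (by decide) (by decide))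
  have h2 := (not_sq_split 31 23 (by decide) (-1) (4*sqrtd + 1) (by decide) (by decide))
  have h3 := (not_sq_split 31 23 (by decide) (sqrtd - 1) (4*sqrtd + 1) (by decide) (by decide))
  simp only [quadCharVecSqrt2, h0, h1, h2, h3, if_true, if_false]

lemma vec_9 : quadCharVecSqrt2 (5*sqrtd - 3) = ![1, 1, 0, 0] := by
  have h0 := (not_sq_split 41 17 (by decide) sqrtd (5*sqrtd - 3) (by decide) (by decide))
  have h1 := (not_sq_split 41 17 (by decide) 3 (5*sqrtd - 3) (by decide) (by decide))
  have h2 := (sq_of (-1) (5*sqrtd - 3) ⟨9, 0⟩ ⟨6, 10⟩ (by decide))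
  have h3 := (sq_of (sqrtd - 1) (5*sqrtd - 3) ⟨4, 0⟩ ⟨1, 2⟩ (by decide))
  simp only [quadCharVecSqrt2, h0, h1, h2, h3, if_true, if_false]

lemma vec_10 : quadCharVecSqrt2 (sqrtd - 7) = ![0, 0, 1, 0] := by
  have h0 := (sq_of sqrtd (sqrtd - 7) ⟨17, 0⟩ ⟨-43, -6⟩ (by decide))
  have h1 := (sq_of 3 (sqrtd - 7) ⟨12, 0⟩ ⟨-21, -3⟩ (by decide))
  have h2 := (not_sq_split 47 7 (by decide) (-1) (sqrtd - 7) (by decide) (by decide))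
  have h3 := (sq_of (sqrtd - 1) (sqrtd - 7) ⟨10, 0⟩ ⟨-15, -2⟩ (by decide))
  simp only [quadCharVecSqrt2, h0, h1, h2, h3, if_true, if_false]

lemma vec_11 : quadCharVecSqrt2 (sqrtd + 7) = ![1, 0, 1, 1] := by
  have h0 := (not_sq_split 47 40 (by decide) sqrtd (sqrtd + 7) (by decide) (by decide))
  have h1 := (sq_of 3 (sqrtd + 7) ⟨12, 0⟩ ⟨21, -3⟩ (by decide))
  have h2 := (not_sq_split 47 40 (by decide) (-1) (sqrtd + 7) (by decide) (by decide))
  have h3 := (not_sq_split 47 40 (by decide) (sqrtd - 1) (sqrtd + 7) (by decide) (by decide))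
  simp only [quadCharVecSqrt2, h0, h1, h2, h3, if_true, if_false]

lemma vec_12 : quadCharVecSqrt2 (4*sqrtd - 11) = ![0, 1, 0, 1] := by
  have h0 := (sq_of sqrtd (4*sqrtd - 11) ⟨5, 0⟩ ⟨-3, -1⟩ (by decide))
  have h1 := (not_sq_split 89 25 (by decide) 3 (4*sqrtd - 11) (by decide) (by decide))
  have h2 := (sq_of (-1) (4*sqrtd - 11) ⟨34, 0⟩ ⟨-143, -52⟩ (by decide))
  have h3 := (not_sq_split 89 25 (by decide) (sqrtd - 1) (4*sqrtd - 11) (by decide) (by decide))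
  simp only [quadCharVecSqrt2, h0, h1, h2, h3, if_true, if_false]

lemma vec_13 : quadCharVecSqrt2 (1 - 7*sqrtd) = ![1, 0, 0, 1] := by
  have h0 := (not_sq_split 97 14 (by decide) sqrtd (1 - 7*sqrtd) (by decide) (by decide))
  have h1 := (sq_of 3 (1 - 7*sqrtd) ⟨10, 0⟩ ⟨-1, -7⟩ (by decide))
  have h2 := (sq_of (-1) (1 - 7*sqrtd) ⟨22, 0⟩ ⟨-5, -35⟩ (by decide))
  have h3 := (not_sq_split 97 14 (by decide) (sqrtd - 1) (1 - 7*sqrtd) (by decide) (by decide))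
  simp only [quadCharVecSqrt2, h0, h1, h2, h3, if_true, if_false]

end

set_option maxRecDepth 100000 in
open Zsqrtd in
/-- The table of quadratic characters over `ℚ(√2)`: for the 14 listed primes
`π` of `ℤ[√2]`, the vectors of quadratic characters of `√2, 3, -1, √2-1`
modulo `π` are pairwise distinct, and their set is exactly the set of nonzero
vectors of `(𝔽₂)⁴` different from `(0,1,0,0)`. -/
theorem quadCharTable_sqrt2 :
    ((([5, 11, sqrtd + 3, sqrtd - 3, 3*sqrtd - 1, sqrtd + 5, sqrtd - 5,
        4*sqrtd - 1, 4*sqrtd + 1, 5*sqrtd - 3, sqrtd - 7, sqrtd + 7,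
        4*sqrtd - 11, 1 - 7*sqrtd] : List (ℤ√2)).map quadCharVecSqrt2).Nodup)
    ∧ {w : Fin 4 → ZMod 2 | ∃ π ∈ ([5, 11, sqrtd + 3, sqrtd - 3, 3*sqrtd - 1,
        sqrtd + 5, sqrtd - 5, 4*sqrtd - 1, 4*sqrtd + 1, 5*sqrtd - 3,
        sqrtd - 7, sqrtd + 7, 4*sqrtd - 11, 1 - 7*sqrtd] : List (ℤ√2)),
        w = quadCharVecSqrt2 π}
      = {w : Fin 4 → ZMod 2 | w ≠ 0 ∧ w ≠ ![0, 1, 0, 0]} := by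
  simp only [List.map_cons, List.map_nil, List.mem_cons, List.not_mem_nil, or_false,
    exists_eq_or_imp, exists_eq_left, vec_0, vec_1, vec_2, vec_3, vec_4, vec_5, vec_6, vec_7, vec_8, vec_9, vec_10, vec_11, vec_12, vec_13]
  refine ⟨by decide, Set.ext fun w => ?_⟩
  simp only [Set.mem_ofPred_eq]
  revert w
  decide
end

section
/- Let R = ℤ[ζ] where ζ² + ζ + 1 = 0 (the Eisenstein integers, the ring of integers of ℚ(√−3), with √−3 = 2ζ+1 and (√−3+1)/2 = ζ+1). For each element π of the list L = [2ζ−1, 2ζ+3, 4ζ+3, 2ζ−3, 2ζ+5, 4ζ+7, 8ζ+9] define the vector v(π) ∈ (𝔽₂)³ whose three coordinates are 0 or 1 according as the residue class of 2ζ+1, of 2, and of ζ+1, respectively, is or is not a square in the quotient ring R/(π). Then the 7 vectors v(π), π ∈ L, are pairwise distinct and each is nonzero; equivalently, {v(π) : π ∈ L} = (𝔽₂)³ \ {0}. -/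
/-- The Eisenstein integers `ℤ[ζ] = ℤ[X]/(X² + X + 1)`, the ring of integers
of `ℚ(√-3)`. -/
noncomputable abbrev ZZeta : Type :=
  AdjoinRoot ((Polynomial.X)^2 + Polynomial.X + 1 : Polynomial ℤ)

/-- `ζ = (-1 + √-3)/2`, the class of `X`, satisfying `ζ² + ζ + 1 = 0`. -/
noncomputable def zeta : ZZeta := AdjoinRoot.root _

/-- `a` is a square modulo `π` in `ℤ[ζ]`. -/
def IsSquareModZeta (a π : ZZeta) : Prop :=
  IsSquare (Ideal.Quotient.mk (Ideal.span {π}) a)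

open scoped Classical in
/-- The vector of quadratic characters of `√-3 = 2ζ + 1`, `2`, `ζ + 1`
modulo `π`. -/
noncomputable def quadCharVecZeta (π : ZZeta) : Fin 3 → ZMod 2 :=
  ![if IsSquareModZeta (2*zeta + 1) π then 0 else 1,
    if IsSquareModZeta 2 π then 0 else 1,
    if IsSquareModZeta (zeta + 1) π then 0 else 1]



lemma zeta_rel : zeta ^ 2 + zeta + 1 = 0 := by
  have h := AdjoinRoot.eval₂_root ((Polynomial.X)^2 + Polynomial.X + 1 : Polynomial ℤ)
  simpa [Polynomial.eval₂_add, zeta] using h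

/-- Reduction of the square condition modulo a degree one prime `uζ + v` of norm `p`
to a condition in `ZMod p`, where `ζ` reduces to `t`. -/
lemma isSquareMod_iff (p : ℕ) (u v t k l m a b : ℤ) (α π : ZZeta)
    (hπ : π = u * zeta + v) (hα : α = a * zeta + b)
    (hN : v ^ 2 - u * v + u ^ 2 = p) (ht : t ^ 2 + t + 1 = p * m) (hk : u * t + v = p * k)
    (h1 : u * l + v * k - u * k = 1) (h2 : v * l - u * k = -t) :
    IsSquareModZeta α π ↔ IsSquare ((a * t + b : ℤ) : ZMod p) := by
  have hz := zeta_rel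
  subst hπ hα
  have hp : ((u : ZZeta) * zeta + v) * ((v - u) - u * zeta) = p := by
    have hN' := congrArg (Int.cast : ℤ → ZZeta) hN
    push_cast at hN'
    linear_combination hN' - u ^ 2 * hz
  have hd : ((u : ZZeta) * zeta + v) * (k * zeta + l) = zeta - t := by
    have h1' := congrArg (Int.cast : ℤ → ZZeta) h1
    have h2' := congrArg (Int.cast : ℤ → ZZeta) h2
    push_cast at h1' h2'
    linear_combination u * k * hz + zeta * h1' + h2'
  constructor
  · rintro ⟨r, hr⟩
    have htp : ((t : ZMod p)) ^ 2 + t + 1 = 0 := by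
      have := congrArg (Int.cast : ℤ → ZMod p) ht
      push_cast at this
      simpa using this
    let φ : ZZeta →+* ZMod p := AdjoinRoot.lift (Int.castRingHom (ZMod p)) (t : ZMod p)
      (by simpa [Polynomial.eval₂_add] using htp)
    have hφ : φ zeta = t := AdjoinRoot.lift_root _
    obtain ⟨r, rfl⟩ := Ideal.Quotient.mk_surjective r
    rw [← map_mul, Ideal.Quotient.eq, Ideal.mem_span_singleton] at hr
    obtain ⟨c, hc⟩ := hr
    have h0 : (u : ZMod p) * t + v = 0 := by
      have := congrArg (Int.cast : ℤ → ZMod p) hk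
      push_cast at this
      simpa using this
    have := congrArg φ hc
    simp only [map_sub, map_add, map_mul, map_intCast, hφ, h0, zero_mul] at this
    refine ⟨φ r, ?_⟩
    push_cast
    exact sub_eq_zero.mp this
  · rintro ⟨r, hr⟩
    obtain ⟨s, rfl⟩ := ZMod.intCast_surjective r
    rw [← Int.cast_mul, ← sub_eq_zero, ← Int.cast_sub, ZMod.intCast_zmod_eq_zero_iff_dvd] at hr
    obtain ⟨j, hj⟩ := hr
    have hj' := congrArg (Int.cast : ℤ → ZZeta) hj
    push_cast at hj'
    refine ⟨Ideal.Quotient.mk _ (s : ZZeta), ?_⟩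
    rw [← map_mul, Ideal.Quotient.eq, Ideal.mem_span_singleton]
    refine ⟨a * (k * zeta + l) + j * ((v - u) - u * zeta), ?_⟩
    linear_combination hj' - a * hd - j * hp

set_option maxRecDepth 100000 in
lemma row_0 : quadCharVecZeta (2*zeta - 1) = ![0, 0, 1] := by
  have h0 : IsSquareModZeta (2*zeta + 1) (2*zeta - 1) := by
    rw [isSquareMod_iff 7 2 (-1) 4 1 2 3 2 1 _ _ (by push_cast; ring) (by push_cast; ring)
      (by norm_num) (by norm_num) (by norm_num) (by norm_num) (by norm_num)]
    decide
  have h1 : IsSquareModZeta (2) (2*zeta - 1) := by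
    rw [isSquareMod_iff 7 2 (-1) 4 1 2 3 0 2 _ _ (by push_cast; ring) (by push_cast; ring)
      (by norm_num) (by norm_num) (by norm_num) (by norm_num) (by norm_num)]
    decide
  have h2 : ¬ IsSquareModZeta (zeta + 1) (2*zeta - 1) := by
    rw [isSquareMod_iff 7 2 (-1) 4 1 2 3 1 1 _ _ (by push_cast; ring) (by push_cast; ring)
      (by norm_num) (by norm_num) (by norm_num) (by norm_num) (by norm_num)]
    decide
  simp [quadCharVecZeta, h0, h1, h2]

set_option maxRecDepth 100000 in
lemma row_1 : quadCharVecZeta (2*zeta + 3) = ![1, 0, 1] := by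
  have h0 : ¬ IsSquareModZeta (2*zeta + 1) (2*zeta + 3) := by
    rw [isSquareMod_iff 7 2 3 2 1 0 1 2 1 _ _ (by push_cast; ring) (by push_cast; ring)
      (by norm_num) (by norm_num) (by norm_num) (by norm_num) (by norm_num)]
    decide
  have h1 : IsSquareModZeta (2) (2*zeta + 3) := by
    rw [isSquareMod_iff 7 2 3 2 1 0 1 0 2 _ _ (by push_cast; ring) (by push_cast; ring)
      (by norm_num) (by norm_num) (by norm_num) (by norm_num) (by norm_num)]
    decide
  have h2 : ¬ IsSquareModZeta (zeta + 1) (2*zeta + 3) := by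
    rw [isSquareMod_iff 7 2 3 2 1 0 1 1 1 _ _ (by push_cast; ring) (by push_cast; ring)
      (by norm_num) (by norm_num) (by norm_num) (by norm_num) (by norm_num)]
    decide
  simp [quadCharVecZeta, h0, h1, h2]

set_option maxRecDepth 100000 in
lemma row_2 : quadCharVecZeta (4*zeta + 3) = ![1, 1, 0] := by
  have h0 : ¬ IsSquareModZeta (2*zeta + 1) (4*zeta + 3) := by
    rw [isSquareMod_iff 13 4 3 9 3 1 7 2 1 _ _ (by push_cast; ring) (by push_cast; ring)
      (by norm_num) (by norm_num) (by norm_num) (by norm_num) (by norm_num)]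
    decide
  have h1 : ¬ IsSquareModZeta (2) (4*zeta + 3) := by
    rw [isSquareMod_iff 13 4 3 9 3 1 7 0 2 _ _ (by push_cast; ring) (by push_cast; ring)
      (by norm_num) (by norm_num) (by norm_num) (by norm_num) (by norm_num)]
    decide
  have h2 : IsSquareModZeta (zeta + 1) (4*zeta + 3) := by
    rw [isSquareMod_iff 13 4 3 9 3 1 7 1 1 _ _ (by push_cast; ring) (by push_cast; ring)
      (by norm_num) (by norm_num) (by norm_num) (by norm_num) (by norm_num)]
    decide
  simp [quadCharVecZeta, h0, h1, h2]

set_option maxRecDepth 100000 in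
lemma row_3 : quadCharVecZeta (2*zeta - 3) = ![0, 1, 1] := by
  have h0 : IsSquareModZeta (2*zeta + 1) (2*zeta - 3) := by
    rw [isSquareMod_iff 19 2 (-3) 11 1 3 7 2 1 _ _ (by push_cast; ring) (by push_cast; ring)
      (by norm_num) (by norm_num) (by norm_num) (by norm_num) (by norm_num)]
    decide
  have h1 : ¬ IsSquareModZeta (2) (2*zeta - 3) := by
    rw [isSquareMod_iff 19 2 (-3) 11 1 3 7 0 2 _ _ (by push_cast; ring) (by push_cast; ring)
      (by norm_num) (by norm_num) (by norm_num) (by norm_num) (by norm_num)]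
    decide
  have h2 : ¬ IsSquareModZeta (zeta + 1) (2*zeta - 3) := by
    rw [isSquareMod_iff 19 2 (-3) 11 1 3 7 1 1 _ _ (by push_cast; ring) (by push_cast; ring)
      (by norm_num) (by norm_num) (by norm_num) (by norm_num) (by norm_num)]
    decide
  simp [quadCharVecZeta, h0, h1, h2]

set_option maxRecDepth 100000 in
lemma row_4 : quadCharVecZeta (2*zeta + 5) = ![1, 1, 1] := by
  have h0 : ¬ IsSquareModZeta (2*zeta + 1) (2*zeta + 5) := by
    rw [isSquareMod_iff 19 2 5 7 1 (-1) 3 2 1 _ _ (by push_cast; ring) (by push_cast; ring)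
      (by norm_num) (by norm_num) (by norm_num) (by norm_num) (by norm_num)]
    decide
  have h1 : ¬ IsSquareModZeta (2) (2*zeta + 5) := by
    rw [isSquareMod_iff 19 2 5 7 1 (-1) 3 0 2 _ _ (by push_cast; ring) (by push_cast; ring)
      (by norm_num) (by norm_num) (by norm_num) (by norm_num) (by norm_num)]
    decide
  have h2 : ¬ IsSquareModZeta (zeta + 1) (2*zeta + 5) := by
    rw [isSquareMod_iff 19 2 5 7 1 (-1) 3 1 1 _ _ (by push_cast; ring) (by push_cast; ring)
      (by norm_num) (by norm_num) (by norm_num) (by norm_num) (by norm_num)]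
    decide
  simp [quadCharVecZeta, h0, h1, h2]

set_option maxRecDepth 100000 in
lemma row_5 : quadCharVecZeta (4*zeta + 7) = ![0, 1, 0] := by
  have h0 : IsSquareModZeta (2*zeta + 1) (4*zeta + 7) := by
    rw [isSquareMod_iff 37 4 7 26 3 (-2) 19 2 1 _ _ (by push_cast; ring) (by push_cast; ring)
      (by norm_num) (by norm_num) (by norm_num) (by norm_num) (by norm_num)]
    decide
  have h1 : ¬ IsSquareModZeta (2) (4*zeta + 7) := by
    rw [isSquareMod_iff 37 4 7 26 3 (-2) 19 0 2 _ _ (by push_cast; ring) (by push_cast; ring)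
      (by norm_num) (by norm_num) (by norm_num) (by norm_num) (by norm_num)]
    decide
  have h2 : IsSquareModZeta (zeta + 1) (4*zeta + 7) := by
    rw [isSquareMod_iff 37 4 7 26 3 (-2) 19 1 1 _ _ (by push_cast; ring) (by push_cast; ring)
      (by norm_num) (by norm_num) (by norm_num) (by norm_num) (by norm_num)]
    decide
  simp [quadCharVecZeta, h0, h1, h2]

set_option maxRecDepth 100000 in
lemma row_6 : quadCharVecZeta (8*zeta + 9) = ![1, 0, 0] := by
  have h0 : ¬ IsSquareModZeta (2*zeta + 1) (8*zeta + 9) := by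
    rw [isSquareMod_iff 73 8 9 8 1 0 1 2 1 _ _ (by push_cast; ring) (by push_cast; ring)
      (by norm_num) (by norm_num) (by norm_num) (by norm_num) (by norm_num)]
    decide
  have h1 : IsSquareModZeta (2) (8*zeta + 9) := by
    rw [isSquareMod_iff 73 8 9 8 1 0 1 0 2 _ _ (by push_cast; ring) (by push_cast; ring)
      (by norm_num) (by norm_num) (by norm_num) (by norm_num) (by norm_num)]
    decide
  have h2 : IsSquareModZeta (zeta + 1) (8*zeta + 9) := by
    rw [isSquareMod_iff 73 8 9 8 1 0 1 1 1 _ _ (by push_cast; ring) (by push_cast; ring)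
      (by norm_num) (by norm_num) (by norm_num) (by norm_num) (by norm_num)]
    decide
  simp [quadCharVecZeta, h0, h1, h2]

/-- The table of quadratic characters over `ℚ(√-3)`: for the 7 listed primes
`π` of `ℤ[ζ]` (these are `√-3 - 2, √-3 + 2, 1 + 2√-3, √-3 - 4, √-3 + 4,
5 + 2√-3, 5 + 4√-3`, with `√-3 = 2ζ + 1`), the vectors of quadratic
characters of `2ζ+1, 2, ζ+1` modulo `π` are pairwise distinct and nonzero;
their set is exactly `(𝔽₂)³ \ {0}`. -/
theorem quadCharTable_sqrtNeg3 :
    ((([2*zeta - 1, 2*zeta + 3, 4*zeta + 3, 2*zeta - 3, 2*zeta + 5,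
        4*zeta + 7, 8*zeta + 9] : List ZZeta).map quadCharVecZeta).Nodup)
    ∧ {w : Fin 3 → ZMod 2 | ∃ π ∈ ([2*zeta - 1, 2*zeta + 3, 4*zeta + 3,
        2*zeta - 3, 2*zeta + 5, 4*zeta + 7, 8*zeta + 9] : List ZZeta),
        w = quadCharVecZeta π}
      = {w : Fin 3 → ZMod 2 | w ≠ 0} := by
  simp only [List.map_cons, List.map_nil, List.mem_cons, List.not_mem_nil, or_false,
    exists_eq_or_imp, exists_eq_left, row_0, row_1, row_2, row_3, row_4, row_5, row_6]
  refine ⟨by decide, ?_⟩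
  ext w
  simp only [Set.mem_ofPred_eq]
  revert w
  decide
end

section
/- Let F be a field with 25 elements and let s ∈ F satisfy s² = 2. Then in F[X] one has the factorization X⁶ − 2X³ − 1 = (X³ + s − 1)·(X³ − s − 1), and both cubic polynomials X³ + s − 1 and X³ − s − 1 are irreducible over F. -/
open Polynomial in
theorem irred_aux (F : Type) [Field F] [Fintype F] (hF : Fintype.card F = 25)
    (t : F) (ht : t ^ 2 = 2) : Irreducible (X^3 - C (1 + t) : F[X]) := by
  have h25 : (25 : F) = 0 := by
    have h := FiniteField.cast_card_eq_zero F
    rw [hF] at h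
    exact_mod_cast h
  have h5 : (5 : F) = 0 := by
    have h : (5 : F) ^ 2 = 0 := by rw [← h25]; norm_num
    exact pow_eq_zero_iff (two_ne_zero) |>.1 h
  apply X_pow_sub_C_irreducible_of_prime Nat.prime_three
  intro b hb
  have hbne : b ≠ 0 := by
    rintro rfl
    have h1 : t = -1 := by linear_combination -hb
    rw [h1] at ht
    exact one_ne_zero (α := F) (by linear_combination -ht)
  have h24 := FiniteField.pow_card_sub_one_eq_one b hbne
  rw [hF] at h24
  have h8 : (1 + t) ^ 8 = 1 := by
    rw [← hb, ← pow_mul]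
    exact h24
  have h2 : (1 + t) ^ 2 = 3 + 2 * t := by linear_combination ht
  have h4 : (1 + t) ^ 4 = 17 + 12 * t := by
    linear_combination ((1 + t) ^ 2 + 3 + 2 * t) * h2 + 4 * ht
  have h8' : (1 + t) ^ 8 = 577 + 408 * t := by
    linear_combination ((1 + t) ^ 4 + 17 + 12 * t) * h4 + 144 * ht
  have hl : 3 * t = -1 := by
    linear_combination h8 - h8' - (115 + 81 * t) * h5
  exact one_ne_zero (α := F) (by
    linear_combination 3 * (3 * t - 1) * hl - 27 * ht - 10 * h5)

open Polynomial in
/-- Over the field `F = 𝔽₂₅` with `s = √2 ∈ F`, one has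
`X⁶ - 2X³ - 1 = (X³ + s - 1)(X³ - s - 1)`, and both cubic factors are
irreducible over `F`. -/
theorem factorization_x6_sub_2x3_sub_1_mod_5
    (F : Type) [Field F] [Fintype F] (hF : Fintype.card F = 25)
    (s : F) (hs : s ^ 2 = 2) :
    (X^6 - 2*X^3 - 1 : F[X]) = (X^3 + C s - 1) * (X^3 - C s - 1) ∧
    Irreducible (X^3 + C s - 1 : F[X]) ∧
    Irreducible (X^3 - C s - 1 : F[X]) := by
  refine ⟨?_, ?_, ?_⟩
  · have h : (C s : F[X]) ^ 2 = 2 := by rw [← C_pow, hs]; rfl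
    linear_combination h
  · have h := irred_aux F hF (-s) (by rw [neg_sq, hs])
    have e : (X^3 + C s - 1 : F[X]) = X^3 - C (1 + -s) := by
      simp only [C_add, C_neg, C_1]; ring
    rw [e]; exact h
  · have h := irred_aux F hF s hs
    have e : (X^3 - C s - 1 : F[X]) = X^3 - C (1 + s) := by
      simp only [C_add, C_1]; ring
    rw [e]; exact h
end

section
/- Let F be a field with 9 elements and let φ ∈ F satisfy φ² + φ = 1. Then in F[X] one has the factorization X⁶ − 2X⁵ − 2X − 1 = (X³ − X² + φX + φ)·(X³ − X² − (1+φ)X − (1+φ)), and both cubic factors are irreducible over F. -/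
open Polynomial in
theorem cubic_irreducible_aux
    (F : Type) [Field F] [Fintype F] (hF : Fintype.card F = 9)
    (φ : F) (hφ : φ ^ 2 + φ = 1) :
    Irreducible (X^3 - X^2 + C φ * X + C φ : F[X]) := by
  have h9 : (9 : F) = 0 := by
    have h := Nat.cast_card_eq_zero F
    rw [hF] at h
    exact_mod_cast h
  have h3 : (3 : F) = 0 := by
    have h : (3 : F) * 3 = 0 := by rw [← h9]; norm_num
    exact mul_self_eq_zero.mp h
  have hdeg : (X^3 - X^2 + C φ * X + C φ : F[X]).natDegree = 3 := by compute_degree!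
  have hne : (X^3 - X^2 + C φ * X + C φ : F[X]) ≠ 0 := by
    intro h
    rw [h] at hdeg
    simp at hdeg
  rw [Polynomial.irreducible_iff_roots_eq_zero_of_degree_le_three (by omega) (by omega)]
  rw [Multiset.eq_zero_iff_forall_notMem]
  intro x hx
  rw [mem_roots hne] at hx
  have hr : x^3 - x^2 + φ * x + φ = 0 := by simpa [IsRoot.def] using hx
  have hx9 : x ^ 9 = x := by rw [← hF]; exact FiniteField.pow_card x
  grind

open Polynomial in
/-- Over the field `F = 𝔽₉` with `φ ∈ F` satisfying `φ² + φ = 1`, one has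
`X⁶ - 2X⁵ - 2X - 1 = (X³ - X² + φX + φ)(X³ - X² - (1+φ)X - (1+φ))`, and both
cubic factors are irreducible over `F`. -/
theorem factorization_mod_3_sqrt5
    (F : Type) [Field F] [Fintype F] (hF : Fintype.card F = 9)
    (φ : F) (hφ : φ ^ 2 + φ = 1) :
    (X^6 - 2*X^5 - 2*X - 1 : F[X])
      = (X^3 - X^2 + C φ * X + C φ) * (X^3 - X^2 - C (1 + φ) * X - C (1 + φ)) ∧
    Irreducible (X^3 - X^2 + C φ * X + C φ : F[X]) ∧
    Irreducible (X^3 - X^2 - C (1 + φ) * X - C (1 + φ) : F[X]) := by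
  refine ⟨?_, cubic_irreducible_aux F hF φ hφ, ?_⟩
  · have h : (C φ : F[X]) ^ 2 + C φ = 1 := by
      rw [← C_pow, ← C_add, hφ, C_1]
    rw [C_add, C_1]
    linear_combination (X + 1) ^ 2 * h
  · have h := cubic_irreducible_aux F hF (-(1 + φ)) (by linear_combination hφ)
    have e : (X^3 - X^2 - C (1 + φ) * X - C (1 + φ) : F[X])
        = X^3 - X^2 + C (-(1 + φ)) * X + C (-(1 + φ)) := by
      rw [C_neg]; ring
    rw [e]
    exact h
end

section
/- Let K be a field of characteristic different from 2 containing an element s with s² = 2. In the polynomial ring K[x,y,z,v] define B = x(x−z)(x−v)(x−z−v)·y(y−z)(y−v)(y+v+2z), and define P₁ = x(x−v−z)(z−v)(3y+v), P₂ = (1/2)(3z+v)(v²−2xv+zv+2x²−2xz)(y−v), P₃ = (1/2)(v²−2xv+zv+2x²−2xz)(3y+v)(z+v), P₄ = (1/2)(v²−2xv+zv+2x²−2xz)(3y+v)(z−v), and P_u = (s/2)·(v−z)(v+3y)²·v²·(2x−v−z)(v+z)(3z+v)(v²−2xv+zv+2x²−2xz)². Then one has the identity of polynomials B(P₁, P₂,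 P₃, P₄) = P_u² · B(x, y, z, v) in K[x,y,z,v]. -/
open MvPolynomial in
/-- The identity `B(P₁, P₂, P₃, P₄) = P_u² · B(x, y, z, v)` in `K[x,y,z,v]`,
expressing that the rational map `Ψ`, defined over `ℚ(√2)`, maps the double
octic `u² = B(x,y,z,v)` to itself. -/
theorem double_octic_endomorphism_identity
    (K : Type) [Field K] (h2 : (2 : K) ≠ 0) (s : K) (hs : s ^ 2 = 2)
    (x y z v B Q P₁ P₂ P₃ P₄ Pu : MvPolynomial (Fin 4) K)
    (hx : x = X 0) (hy : y = X 1) (hz : z = X 2) (hv : v = X 3)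
    (hB : B = x * (x - z) * (x - v) * (x - z - v)
            * y * (y - z) * (y - v) * (y + v + 2*z))
    (hQ : Q = v^2 - 2*x*v + z*v + 2*x^2 - 2*x*z)
    (hP₁ : P₁ = x * (x - v - z) * (z - v) * (3*y + v))
    (hP₂ : P₂ = C (1/2 : K) * (3*z + v) * Q * (y - v))
    (hP₃ : P₃ = C (1/2 : K) * Q * (3*y + v) * (z + v))
    (hP₄ : P₄ = C (1/2 : K) * Q * (3*y + v) * (z - v))
    (hPu : Pu = C (s/2) * (v - z) * (v + 3*y)^2 * v^2
              * (2*x - v - z) * (v + z) * (3*z + v) * Q^2) :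
    aeval ![P₁, P₂, P₃, P₄] B = Pu ^ 2 * B := by
  have hc : (2 : MvPolynomial (Fin 4) K) * C (1/2 : K) = 1 := by
    have : (2 : MvPolynomial (Fin 4) K) = C (2 : K) := (map_ofNat C 2).symm
    rw [this, ← C_mul, ← C_1]
    congr 1
    field_simp
  have hsc : C (s/2) ^ 2 = (C (1/2 : K) : MvPolynomial (Fin 4) K) := by
    rw [← C_pow]
    congr 1
    rw [div_pow, hs]
    field_simp
  have key : aeval ![P₁, P₂, P₃, P₄] B = P₁ * (P₁ - P₃) * (P₁ - P₄) * (P₁ - P₃ - P₄)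
      * P₂ * (P₂ - P₃) * (P₂ - P₄) * (P₂ + P₄ + 2*P₃) := by
    rw [hB, hx, hy, hz, hv]
    have h2' : (aeval ![P₁, P₂, P₃, P₄] : MvPolynomial (Fin 4) K →ₐ[K] _) 2 = 2 := map_ofNat _ 2
    simp only [map_mul, map_sub, map_add, h2', aeval_X]
    rfl
  rw [key]
  generalize C (1/2 : K) = c at *
  generalize C (s/2) = d at *
  clear key hx hy hz hv
  have e1 : P₁ - P₃ = -(c * (3*y+v) * v * (2*x-v-z)^2) := by
    rw [hP₁, hP₃, hQ]
    linear_combination (-(x * (x - v - z) * (z - v) * (3*y + v))) * hc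
  have e2 : P₁ - P₄ = -(c * (3*y+v) * (z-v) * v * (v+z)) := by
    rw [hP₁, hP₄, hQ]
    linear_combination (-(x * (x - v - z) * (z - v) * (3*y + v))) * hc
  have e3 : P₁ - P₃ - P₄ = -((3*y+v) * (z+v) * (x-z) * (x-v)) := by
    rw [hP₁, hP₃, hP₄, hQ]
    linear_combination (-(v^2 - 2*x*v + z*v + 2*x^2 - 2*x*z) * (3*y+v) * z) * hc
  have e4 : P₂ - P₃ = -(Q * v * (y + v + 2*z)) := by
    rw [hP₂, hP₃]
    linear_combination (-(Q * v * (y + v + 2*z))) * hc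
  have e5 : P₂ - P₄ = 2 * (Q * v * (y - z)) := by
    rw [hP₂, hP₄]
    linear_combination (2 * (Q * v * (y - z))) * hc
  have e6 : P₂ + P₄ + 2*P₃ = 2 * (Q * y * (3*z+v)) := by
    rw [hP₂, hP₃, hP₄]
    linear_combination (2 * (Q * y * (3*z+v))) * hc
  rw [e3, e1, e2, e4, e5, e6, hP₁, hP₂]
  have hPu2 : Pu ^ 2 = c * ((v - z) * (v + 3*y)^2 * v^2
      * (2*x - v - z) * (v + z) * (3*z + v) * Q^2)^2 := by
    rw [hPu, ← hsc]; ring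
  rw [hPu2, hB]
  clear hPu2 e1 e2 e3 e4 e5 e6 hP₁ hP₂ hP₃ hP₄ hPu hQ hB
  have h4 : 4 * c^3 = c := by linear_combination (2*c^2 + c) * hc
  have hA : v + 3*y = 3*y + v := by ring
  have hD : v - z = -(z - v) := by ring
  have hE : v + z = z + v := by ring
  have hF : x - v - z = x - z - v := by ring
  rw [hA, hD, hE, hF]
  generalize 3*y + v = a1
  generalize z - v = a2
  generalize z + v = a3
  generalize x - z - v = a4
  generalize 2*x - v - z = a5
  generalize 3*z + v = a6
  generalize y + v + 2*z = a7
  generalize x - z = a8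
  generalize x - v = a9
  generalize y - z = a10
  generalize y - v = a11
  linear_combination (x * a4 * a2^2 * a1^4 * v^4 * a5^2 * a3^2 * a8 * a9 * a6^2 * Q^4 * a11 * a7 * a10 * y) * h4
end

section
/- Let R be a commutative ring containing an element ζ with ζ² + ζ + 1 = 0. In R[x,y,z,v] define f = x·y·z·v·(x+y)·(x+y+z−v)·(ζx−y+ζz)·(y−ζz−v) and let f^σ = x·y·z·v·(x+y)·(x+y+z−v)·(ζ̄x−y+ζ̄z)·(y−ζ̄z−v) where ζ̄ = −1−ζ. Then substituting X = ζx, Y = −ζx−ζy, Z = −(ζ+1)x−y−(ζ+1)z, V = −(ζ+1)(x+y+z−v) into f yields f(X, Y, Z, V) = − f^σ(x, y, z, v) as an identity in R[x,y,z,v]. -/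
open MvPolynomial in
/-- In `R[x,y,z,v]` with `ζ² + ζ + 1 = 0`, substituting
`X = ζx, Y = -ζx - ζy, Z = -(ζ+1)x - y - (ζ+1)z, V = -(ζ+1)(x+y+z-v)` into
the octic `f` defining the double octic `Z` yields `-f^σ`, where `f^σ` is the
Galois conjugate octic (with `ζ` replaced by `ζ̄ = -1 - ζ`). -/
theorem double_octic_conjugate_identity
    (R : Type) [CommRing R] (ζ : R) (hζ : ζ ^ 2 + ζ + 1 = 0)
    (x y z v f fσ : MvPolynomial (Fin 4) R)
    (hx : x = X 0) (hy : y = X 1) (hz : z = X 2) (hv : v = X 3)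
    (hf : f = x * y * z * v * (x + y) * (x + y + z - v)
            * (C ζ * x - y + C ζ * z) * (y - C ζ * z - v))
    (hfσ : fσ = x * y * z * v * (x + y) * (x + y + z - v)
            * (C (-1 - ζ) * x - y + C (-1 - ζ) * z)
            * (y - C (-1 - ζ) * z - v)) :
    aeval ![C ζ * x,
           -(C ζ * x) - C ζ * y,
           -(C (ζ + 1) * x) - y - C (ζ + 1) * z,
           -(C (ζ + 1)) * (x + y + z - v)] f = -fσ := by
  have hw : (C ζ : MvPolynomial (Fin 4) R) ^ 2 + C ζ + 1 = 0 := by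
    rw [← C_pow, ← C_1, ← C_add, ← C_add, hζ, C_0]
  have h1 : (C (ζ + 1) : MvPolynomial (Fin 4) R) = C ζ + 1 := by simp
  have h2 : (C (-1 - ζ) : MvPolynomial (Fin 4) R) = -1 - C ζ := by simp
  have hC : ∀ g : Fin 4 → MvPolynomial (Fin 4) R, aeval g (C ζ) = (C ζ : MvPolynomial (Fin 4) R) := by
    intro g
    rw [aeval_C]; rfl
  have key : ∀ g : Fin 4 → MvPolynomial (Fin 4) R, aeval g f =
      g 0 * g 1 * g 2 * g 3 * (g 0 + g 1) * (g 0 + g 1 + g 2 - g 3)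
        * (C ζ * g 0 - g 1 + C ζ * g 2) * (g 1 - C ζ * g 2 - g 3) := by
    intro g
    rw [hf, hx, hy, hz, hv]
    simp only [map_mul, map_add, map_sub, aeval_X, hC]
  rw [key, hfσ, h1, h2]
  clear key hC h1 h2 hf hfσ hx hy hz hv
  simp only [Matrix.cons_val]
  generalize (C ζ : MvPolynomial (Fin 4) R) = w at *
  have e1 : w * x + (-(w * x) - w * y) = -w * y := by ring
  have e2 : -w * y + (-((w + 1) * x) - y - (w + 1) * z) - -(w + 1) * (x + y + z - v)
      = -(w + 1) * v := by ring
  have e3 : w * (w * x) - (-(w * x) - w * y) + w * (-((w + 1) * x) - y - (w + 1) * z) = z := by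
    linear_combination (-z) * hw
  have e4 : (-(w * x) - w * y) - w * (-((w + 1) * x) - y - (w + 1) * z)
      - -(w + 1) * (x + y + z - v) = (w + 1) * (y - (-1 - w) * z - v) := by
    linear_combination (x) * hw
  have e5 : w ^ 3 * (w + 1) ^ 3 = -1 := by
    linear_combination (w ^ 4 + 2 * w ^ 3 - w + 1) * hw
  rw [e1, e2, e3, e4]
  linear_combination (x * y * z * v * (x + y) * (x + y + z - v)
            * ((-1 - w) * x - y + (-1 - w) * z)
            * (y - (-1 - w) * z - v)) * e5
end

section
/- Let F be a field with 9 elements and let φ ∈ F satisfy φ² + φ = 1. Define f_Y(x,y,z,v) = x·y·z·v·(x+y+z)·(φy−z+v)·(x+y+φv)·((1−φ)x+y−φz+φv). Then the number of tuples (x,y,z,v,u) ∈ F⁵ with (x,y,z,v) ≠ (0,0,0,0) and u² = f_Y(x,y,z,v) equals 6520 = 815·8. -/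
/-- The octic defining the singular double cover `Y′ : u² = f_Y(x,y,z,v)`
whose crepant resolution is the rigid Calabi–Yau threefold `Y` over `ℚ(√5)`
(with `φ = (-1+√5)/2`). -/
def fY {F : Type} [CommRing F] (φ x y z v : F) : F :=
  x * y * z * v * (x + y + z) * (φ*y - z + v) * (x + y + φ*v)
    * ((1 - φ)*x + y - φ*z + φ*v)

namespace PC

/-- Sum over the nine pairs `(a,b)` with `a,b < 3`. -/
def S (f : ℕ → ℕ → ℕ) : ℕ :=
  f 0 0 + f 0 1 + f 0 2 + f 1 0 + f 1 1 + f 1 2 + f 2 0 + f 2 1 + f 2 2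

/-- The norm form of `a + b φ` (modulo 3). -/
def N (a b : ℕ) : ℕ := a * a + 2 * a * b + 2 * b * b

/-- Product of the norms of the eight linear forms. -/
def M (a b c d i j k l : ℕ) : ℕ :=
  N a b * N c d * N i j * N k l * N (a + c + i) (b + d + j)
    * N (d + 2 * i + k) (c + 2 * d + 2 * j + l)
    * N (a + c + l) (b + d + k + 2 * l)
    * N (a + 2 * b + c + 2 * j + l) (b + 2 * a + 4 * b + d + 2 * i + 4 * j + k + 2 * l)

theorem total :
    S (fun a b => S fun c d => S fun i j => S fun k l => (M a b c d i j k l + 1) % 3) = 6521 := by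
  decide +kernel

variable {F : Type} [Field F]

/-- The element `a + b φ`. -/
def e (φ : F) (a b : ℕ) : F := (a : F) + (b : F) * φ

theorem three_eq [Fintype F] (hF : Fintype.card F = 9) : (3 : F) = 0 := by
  have h : ((Fintype.card F : ℕ) : F) = 0 := Nat.cast_card_eq_zero F
  rw [hF] at h
  have h2 : (3 : F) * 3 = 0 := by
    have : ((9 : ℕ) : F) = 3 * 3 := by norm_num
    rw [← this, h]
  exact mul_self_eq_zero.mp h2

theorem cast_mod (h3 : (3 : F) = 0) (n : ℕ) : ((n % 3 : ℕ) : F) = n := by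
  conv_rhs => rw [← Nat.mod_add_div n 3]
  push_cast
  rw [h3]; ring

theorem two_ne (h3 : (3 : F) = 0) : (2 : F) ≠ 0 := by
  intro h
  have : (1 : F) = 0 := by linear_combination h3 - h
  exact one_ne_zero this

theorem cast_zero (h3 : (3 : F) = 0) (n : ℕ) (h : (n : F) = 0) : n % 3 = 0 := by
  rw [← cast_mod h3] at h
  have h2 := two_ne h3
  have : n % 3 < 3 := Nat.mod_lt _ (by norm_num)
  generalize n % 3 = r at *
  interval_cases r
  · rfl
  · simp at h
  · exact absurd (by simpa using h) h2

theorem cast_inj (h3 : (3 : F) = 0) (m n : ℕ) (h : (m : F) = n) : m % 3 = n % 3 := by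
  have : ((m + 2 * n : ℕ) : F) = 0 := by
    push_cast
    linear_combination h + (n : F) * h3
  have := cast_zero h3 _ this
  omega

theorem cube (h3 : (3 : F) = 0) (n : ℕ) : (n : F) ^ 3 = n := by
  rw [← cast_mod h3 n]
  have : n % 3 < 3 := Nat.mod_lt _ (by norm_num)
  generalize n % 3 = r at *
  interval_cases r
  · simp
  · simp
  · push_cast; linear_combination 2 * h3

theorem e_pow (h3 : (3 : F) = 0) (φ : F) (hφ : φ ^ 2 + φ = 1) (a b : ℕ) :
    (e φ a b) ^ 4 = (N a b : ℕ) := by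
  have h : (e φ a b) ^ 3 = (a : F) - b - b * φ := by
    have ha := cube h3 a
    have hb := cube h3 b
    have hp : φ ^ 3 = -1 - φ := by linear_combination (φ - 1) * hφ + φ * h3
    unfold e
    calc ((a : F) + b * φ) ^ 3 = (a : F) ^ 3 + (b : F) ^ 3 * φ ^ 3 := by
          linear_combination ((a : F) ^ 2 * b * φ + a * b ^ 2 * φ ^ 2) * h3
      _ = _ := by rw [ha, hb, hp]; ring
  rw [pow_succ, h]
  unfold e N
  push_cast
  linear_combination (-(b : F) ^ 2) * hφ - ((a : F) * b + b ^ 2) * h3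

theorem e_inj (h3 : (3 : F) = 0) (φ : F) (hφ : φ ^ 2 + φ = 1) (a b c d : ℕ)
    (h : e φ a b = e φ c d) : a % 3 = c % 3 ∧ b % 3 = d % 3 := by
  have h0 : e φ (a + 2 * c) (b + 2 * d) = 0 := by
    unfold e at *
    push_cast
    linear_combination h + ((c : F) + d * φ) * h3
  have h1 := e_pow h3 φ hφ (a + 2 * c) (b + 2 * d)
  rw [h0] at h1
  have h2 := cast_zero h3 _ (by rw [← h1]; simp)
  have key : ∀ p q : ℕ, N p q % 3 = 0 → p % 3 = 0 ∧ q % 3 = 0 := by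
    intro p q hpq
    have e1 : N p q % 3 = N (p % 3) (q % 3) % 3 := by
      unfold N
      simp [Nat.add_mod, Nat.mul_mod]
    rw [e1] at hpq
    have hp : p % 3 < 3 := Nat.mod_lt _ (by norm_num)
    have hq : q % 3 < 3 := Nat.mod_lt _ (by norm_num)
    generalize p % 3 = p at *
    generalize q % 3 = q at *
    interval_cases p <;> interval_cases q <;> simp_all [N]
  have := key _ _ h2
  omega

theorem e_bij [Fintype F] (hF : Fintype.card F = 9) (φ : F) (hφ : φ ^ 2 + φ = 1) :
    Function.Bijective (fun p : Fin 3 × Fin 3 => e φ p.1 p.2) := by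
  rw [Fintype.bijective_iff_injective_and_card]
  refine ⟨?_, by simp [hF]⟩
  rintro ⟨a, b⟩ ⟨c, d⟩ h
  have := e_inj (three_eq hF) φ hφ _ _ _ _ h
  simp only at this
  ext <;> simp <;> omega

theorem sum_eq [Fintype F] (hF : Fintype.card F = 9) (φ : F) (hφ : φ ^ 2 + φ = 1) (g : F → ℕ) :
    ∑ x, g x = S (fun a b => g (e φ a b)) := by
  rw [← (e_bij hF φ hφ).sum_comp g, Fintype.sum_prod_type]
  simp [Fin.sum_univ_three, S]
  ring

theorem roots [Fintype F] [DecidableEq F] (hF : Fintype.card F = 9) (φ : F)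
    (hφ : φ ^ 2 + φ = 1) (c : F) (m : ℕ) (hm : c ^ 4 = (m : F)) :
    ∑ u : F, (if u ^ 2 = c then 1 else 0) = (m + 1) % 3 := by
  have h3 := three_eq hF
  obtain ⟨⟨a, b⟩, rfl⟩ := (e_bij hF φ hφ).2 c
  simp only at hm ⊢
  rw [e_pow h3 φ hφ] at hm
  have hm' := cast_inj h3 _ _ hm
  rw [sum_eq hF φ hφ]
  have key : ∀ i j : ℕ, (e φ i j ^ 2 = e φ a b) ↔
      ((i * i + j * j) % 3 = a % 3 ∧ (2 * i * j + 2 * j * j) % 3 = b % 3) := by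
    intro i j
    have : e φ i j ^ 2 = e φ (i * i + j * j) (2 * i * j + 2 * j * j) := by
      unfold e
      push_cast
      linear_combination (j : F) ^ 2 * hφ - (j : F) ^ 2 * φ * h3
    rw [this]
    constructor
    · exact e_inj h3 φ hφ _ _ _ _
    · rintro ⟨h1, h2⟩
      unfold e
      rw [← cast_mod h3 (i * i + j * j), ← cast_mod h3 (2 * i * j + 2 * j * j), h1, h2,
        cast_mod h3, cast_mod h3]
  simp only [key]
  rw [Nat.add_mod, ← hm']
  clear hm hm' key
  revert a b
  decide

end PC

open PC in
theorem point_count_fY_9 (F : Type) [Field F] [Fintype F]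
    (hF : Fintype.card F = 9) (φ : F) (hφ : φ ^ 2 + φ = 1) :
    Nat.card {p : F × F × F × F × F |
      (p.1, p.2.1, p.2.2.1, p.2.2.2.1) ≠ (0, 0, 0, 0) ∧
      p.2.2.2.2 ^ 2 = fY φ p.1 p.2.1 p.2.2.1 p.2.2.2.1} = 6520 := by
  classical
  have h3 := three_eq hF
  have hall : (Finset.univ.filter (fun p : F × F × F × F × F =>
      p.2.2.2.2 ^ 2 = fY φ p.1 p.2.1 p.2.2.1 p.2.2.2.1)).card = 6521 := by
    rw [Finset.card_filter]
    simp only [Fintype.sum_prod_type]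
    rw [← total, sum_eq hF φ hφ]
    congr 1; funext a b
    rw [sum_eq hF φ hφ]
    congr 1; funext c d
    rw [sum_eq hF φ hφ]
    congr 1; funext i j
    rw [sum_eq hF φ hφ]
    congr 1; funext k l
    apply roots hF φ hφ
    unfold M
    push_cast only [Nat.cast_mul]
    simp only [← e_pow h3 φ hφ, ← mul_pow]
    congr 1
    unfold fY
    have h5 : φ * e φ c d - e φ i j + e φ k l =
        e φ (d + 2 * i + k) (c + 2 * d + 2 * j + l) := by
      unfold e; push_cast
      linear_combination (d : F) * hφ - ((i : F) + j * φ + d * φ) * h3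
    have h6 : e φ a b + e φ c d + φ * e φ k l =
        e φ (a + c + l) (b + d + k + 2 * l) := by
      unfold e; push_cast
      linear_combination (l : F) * hφ - ((l : F) * φ) * h3
    have h4 : e φ a b + e φ c d + e φ i j = e φ (a + c + i) (b + d + j) := by
      unfold e; push_cast; ring
    have h7 : (1 - φ) * e φ a b + e φ c d - φ * e φ i j + φ * e φ k l =
        e φ (a + 2 * b + c + 2 * j + l)
          (b + 2 * a + 4 * b + d + 2 * i + 4 * j + k + 2 * l) := by
      unfold e; push_cast
      linear_combination ((l : F) - b - j) * hφ
        - ((l : F) * φ + b + j + φ * (a + b + i + j)) * h3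
    rw [h4, h5, h6, h7]
  have hset : {p : F × F × F × F × F |
      (p.1, p.2.1, p.2.2.1, p.2.2.2.1) ≠ (0, 0, 0, 0) ∧
      p.2.2.2.2 ^ 2 = fY φ p.1 p.2.1 p.2.2.1 p.2.2.2.1} =
      (((Finset.univ.filter (fun p : F × F × F × F × F =>
      p.2.2.2.2 ^ 2 = fY φ p.1 p.2.1 p.2.2.1 p.2.2.2.1)).erase 0 : Finset _) : Set _) := by
    ext ⟨x, y, z, v, u⟩
    simp only [Set.mem_ofPred_eq, Finset.coe_erase, Finset.coe_filter, Finset.mem_univ, true_and,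
      Set.mem_sdiff, Set.mem_singleton_iff, ne_eq, Prod.mk.injEq, Prod.mk_eq_zero]
    constructor
    · rintro ⟨h1, h2⟩
      exact ⟨h2, fun h => h1 ⟨h.1, h.2.1, h.2.2.1, h.2.2.2.1⟩⟩
    · rintro ⟨h2, h1⟩
      refine ⟨?_, h2⟩
      rintro ⟨rfl, rfl, rfl, rfl⟩
      apply h1
      simpa [fY] using h2
  rw [hset]
  simp only [Finset.coe_sort_coe, Nat.card_eq_fintype_card, Fintype.card_coe]
  rw [Finset.card_erase_of_mem (Finset.mem_filter.mpr ⟨Finset.mem_univ _, by simp [fY]⟩), hall]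
end
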